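/- In the heat kernel setup, fix an integer b ≥ 2, α ∈ (−2,1) and β < 0 with α+β ∈ (−2,1). With the paraproduct Π_g^{(b)}(f) defined as in the setup (its frequency pieces Q_s^{(b−1)} Π_g^{(b)}(f) and e^{−L} Π_g^{(b)}(f) being given by absolutely convergent dt/t-integrals), there is a constant C such that for all f, g ∈ L^∞(μ) with ‖f‖_{C^α,(b−1)} < ∞ and ‖g‖_{C^β,(b−1)} < ∞: ‖e^{−L} Π_g^{(b)}(f)‖_∞ + sup_{0<s≤1} s^{−(α+β)/2} ‖Q_s^{(b−1)} Π_g^{(b)}(f)‖_∞ ≤ C·‖g‖_{C^β,(b−1)}·‖f‖_{C^α,(b−1)}, i.e. ‖Π_g^{(b)}(f)‖_{C^{α+β}} ≲ ‖g‖_{C^β}‖f‖_{C^α}. (Proposition 3.2, second estimate.) -/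

import Mathlib

open MeasureTheory Metric Set
open scoped ENNReal NNReal

noncomputable section

/-- The (pointwise) supremum norm of a real-valued function, valued in `ℝ≥0∞`. -/
def supNorm {M : Type*} (g : M → ℝ) : ℝ≥0∞ := ⨆ x, (‖g x‖₊ : ℝ≥0∞)

/-- `γ_a = ∫_0^∞ s^a e^{-s} ds/s`. -/
def gammaInt (a : ℕ) : ℝ := ∫ s in Set.Ioi (0 : ℝ), s ^ a * Real.exp (-s) / s

/-- A conservative heat kernel on a doubling metric measure space, satisfying the
Gaussian upper estimates (UE) for all time derivatives, for `0 < t ≤ 1`. -/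
structure HeatKernelSetup (M : Type*) [MeasurableSpace M] [MetricSpace M] where
  μ : Measure M
  p : ℝ → M → M → ℝ
  C_D : ℝ
  C_D_pos : 0 < C_D
  doubling : ∀ (x : M) (r : ℝ), 0 < r →
    μ (Metric.ball x (2 * r)) ≤ ENNReal.ofReal C_D * μ (Metric.ball x r)
  p_nonneg : ∀ t : ℝ, 0 < t → ∀ x y, 0 ≤ p t x y
  p_symm : ∀ t : ℝ, 0 < t → ∀ x y, p t x y = p t y x
  p_meas : ∀ t : ℝ, 0 < t → Measurable (Function.uncurry (p t))
  semigroup : ∀ s t : ℝ, 0 < s → 0 < t → ∀ x z,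
    p (s + t) x z = ∫ y, p s x y * p t y z ∂μ
  conservative : ∀ t : ℝ, 0 < t → ∀ x, ∫ y, p t x y ∂μ = 1
  smooth : ∀ (x y : M) (m : ℕ) (t : ℝ), 0 < t →
    DifferentiableAt ℝ (iteratedDeriv m (fun s => p s x y)) t
  diff_under_int : ∀ (f : M → ℝ), Measurable f → supNorm f < ⊤ →
    ∀ (m : ℕ) (x : M) (t : ℝ), 0 < t →
      iteratedDeriv m (fun s => ∫ y, p s x y * f y ∂μ) t
        = ∫ y, iteratedDeriv m (fun s => p s x y) t * f y ∂μ
  UE : ∀ m : ℕ, ∃ C, 0 < C ∧ ∃ c, 0 < c ∧ ∀ t : ℝ, 0 < t → t ≤ 1 → ∀ x y,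
    |t ^ m * iteratedDeriv m (fun s => p s x y) t|
      ≤ C / Real.sqrt ((μ (Metric.ball x (Real.sqrt t))).toReal
            * (μ (Metric.ball y (Real.sqrt t))).toReal)
          * Real.exp (-c * dist x y ^ 2 / t)

namespace HeatKernelSetup

variable {M : Type*} [MeasurableSpace M] [MetricSpace M] (H : HeatKernelSetup M)

/-- The semigroup `e^{-tL}` applied to `f`. -/
def S (t : ℝ) (f : M → ℝ) (x : M) : ℝ := ∫ y, H.p t x y * f y ∂H.μ

/-- `Q_t^{(a)} f = (-1)^a t^a ∂_t^a (e^{-tL} f)`. -/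
def Q (a : ℕ) (t : ℝ) (f : M → ℝ) (x : M) : ℝ :=
  (-1 : ℝ) ^ a * t ^ a * iteratedDeriv a (fun s => H.S s f x) t

/-- `P_t^{(a)} f = ∑_{k<a} c_{a,k} (-1)^k t^k ∂_t^k (e^{-tL} f)`, where the coefficients
`c_{a,k} = 1/k!` are determined by `φ_a(x) = (∑_k c_{a,k} x^k) e^{-x}`. -/
def P (a : ℕ) (t : ℝ) (f : M → ℝ) (x : M) : ℝ :=
  ∑ k ∈ Finset.range a, ((Nat.factorial k : ℝ))⁻¹ * (-1 : ℝ) ^ k * t ^ k *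
    iteratedDeriv k (fun s => H.S s f x) t

/-- `(tL)P_t^{(a)} f = ∑_{k<a} c_{a,k} (-1)^{k+1} t^{k+1} ∂_t^{k+1} (e^{-tL} f)`. -/
def LP (a : ℕ) (t : ℝ) (f : M → ℝ) (x : M) : ℝ :=
  ∑ k ∈ Finset.range a, ((Nat.factorial k : ℝ))⁻¹ * (-1 : ℝ) ^ (k + 1) * t ^ (k + 1) *
    iteratedDeriv (k + 1) (fun s => H.S s f x) t

/-- The Hölder norm `‖f‖_{C^σ,(a)} = ‖e^{-L} f‖_∞ + sup_{0<t≤1} t^{-σ/2} ‖Q_t^{(a)} f‖_∞`. -/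
def CNorm (a : ℕ) (σ : ℝ) (f : M → ℝ) : ℝ≥0∞ :=
  supNorm (H.S 1 f) +
    ⨆ t ∈ Set.Ioc (0 : ℝ) 1, ENNReal.ofReal (t ^ (-σ / 2)) * supNorm (H.Q a t f)

/-- The integrand of the paraproduct `Π_g^{(b)}(f)` at frequency scale `t`:
`(tL)P_t^{(b)}( Q_t^{(b-1)} f · P_t^{(b)} g ) + Q_t^{(b-1)}( (tL)P_t^{(b)} f · P_t^{(b)} g )`. -/
def paraInner (b : ℕ) (g f : M → ℝ) (t : ℝ) : M → ℝ := fun y =>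
  H.LP b t (fun z => H.Q (b - 1) t f z * H.P b t g z) y
    + H.Q (b - 1) t (fun z => H.LP b t f z * H.P b t g z) y

/-- `Q_s^{(a)} Π_g^{(b)}(f)`, defined by applying `Q_s^{(a)}` under the time integral. -/
def paraQ (b a : ℕ) (g f : M → ℝ) (s : ℝ) : M → ℝ := fun x =>
  (gammaInt b)⁻¹ * ∫ t in Set.Ioc (0 : ℝ) 1, H.Q a s (H.paraInner b g f t) x / t

/-- `e^{-L} Π_g^{(b)}(f)`, defined by applying `e^{-L}` under the time integral. -/
def paraS (b : ℕ) (g f : M → ℝ) : M → ℝ := fun x =>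
  (gammaInt b)⁻¹ * ∫ t in Set.Ioc (0 : ℝ) 1, H.S 1 (H.paraInner b g f t) x / t

/-- The paraproduct `Π_g^{(b)}(f)` as a function, when the integral converges. -/
def paraFn (b : ℕ) (g f : M → ℝ) : M → ℝ := fun x =>
  (gammaInt b)⁻¹ * ∫ t in Set.Ioc (0 : ℝ) 1, H.paraInner b g f t x / t

/-- The resolution operator `R(v)_t = ∫_0^t P_{t-s}^{(b)} v(s) ds`. -/
def resolve (b : ℕ) (v : ℝ → M → ℝ) (t : ℝ) : M → ℝ := fun x =>
  ∫ s in Set.Ioc (0 : ℝ) t, H.P b (t - s) (v s) x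

end HeatKernelSetup

namespace HeatKernelSetup

section helper

variable {M : Type*} [MeasurableSpace M] [MetricSpace M] (H : HeatKernelSetup M)

/-- Time derivatives of the kernel. -/
def q (m : ℕ) (t : ℝ) (x y : M) : ℝ := iteratedDeriv m (fun s => H.p s x y) t

/-- Time derivatives of the semigroup. -/
def D (m : ℕ) (t : ℝ) (f : M → ℝ) (x : M) : ℝ := iteratedDeriv m (fun s => H.S s f x) t

/-- Real volume. -/
def V (x : M) (r : ℝ) : ℝ := (H.μ (ball x r)).toReal

lemma doubling_iter (x : M) (r : ℝ) (hr : 0 < r) (n : ℕ) :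
    H.μ (ball x (2 ^ n * r)) ≤ ENNReal.ofReal H.C_D ^ n * H.μ (ball x r) := by
  induction n with
  | zero => simp
  | succ n ih =>
    have h1 := H.doubling x (2 ^ n * r) (by positivity)
    calc H.μ (ball x (2 ^ (n + 1) * r)) = H.μ (ball x (2 * (2 ^ n * r))) := by
          congr 2; ring
      _ ≤ _ := h1
      _ ≤ ENNReal.ofReal H.C_D * (ENNReal.ofReal H.C_D ^ n * H.μ (ball x r)) := by gcongr
      _ = _ := by rw [pow_succ]; ring

lemma exists_pow_gt (r : ℝ) (hr : 0 < r) (d : ℝ) : ∃ n : ℕ, d < 2 ^ n * r := by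
  obtain ⟨n, hn⟩ := pow_unbounded_of_one_lt (d / r) (by norm_num : (1 : ℝ) < 2)
  exact ⟨n, by rwa [div_lt_iff₀ hr] at hn⟩

lemma ball_pos (x : M) (r : ℝ) (hr : 0 < r) : 0 < H.μ (ball x r) := by
  rw [pos_iff_ne_zero]
  intro h0
  have h1 : ∀ n : ℕ, H.μ (ball x (2 ^ n * r)) = 0 := by
    intro n
    have := H.doubling_iter x r hr n
    rw [h0] at this
    simpa using this
  have h2 : H.μ univ = 0 := by
    have : (univ : Set M) ⊆ ⋃ n : ℕ, ball x (2 ^ n * r) := by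
      intro y _
      obtain ⟨n, hn⟩ := exists_pow_gt r hr (dist y x)
      exact mem_iUnion.2 ⟨n, hn⟩
    exact measure_mono_null this (measure_iUnion_null h1)
  have h3 := H.conservative 1 one_pos x
  rw [Measure.measure_univ_eq_zero.1 h2] at h3
  simp at h3

lemma ball_lt_top (x : M) (r : ℝ) (_hr : 0 < r) : H.μ (ball x r) < ⊤ := by
  rw [lt_top_iff_ne_top]
  intro h0
  have h1 : ∀ y : M, ∀ ρ : ℝ, 0 < ρ → H.μ (ball y ρ) = ⊤ := by
    intro y ρ hρ
    obtain ⟨n, hn⟩ := exists_pow_gt ρ hρ (r + dist x y)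
    have h2 : H.μ (ball x r) ≤ H.μ (ball y (2 ^ n * ρ)) :=
      measure_mono (ball_subset_ball' hn.le)
    have h3 := h2.trans (H.doubling_iter y ρ hρ n)
    rw [h0, top_le_iff, ENNReal.mul_eq_top] at h3
    rcases h3 with h3 | h3
    · exact h3.2
    · exact absurd h3.1 (ENNReal.pow_ne_top ENNReal.ofReal_ne_top)
  obtain ⟨C, _, c, _, hU⟩ := H.UE 0
  have h2 : ∀ y, H.p 1 x y = 0 := by
    intro y
    have := hU 1 one_pos le_rfl x y
    rw [h1 x _ (by simp)] at this
    simpa using this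
  have h3 := H.conservative 1 one_pos x
  simp [h2] at h3

lemma sigmaFinite (x : M) : SigmaFinite H.μ := by
  refine ⟨⟨⟨fun n : ℕ => toMeasurable H.μ (ball x ((n : ℝ) + 1)), fun _ => trivial, ?_, ?_⟩⟩⟩
  · intro n
    rw [measure_toMeasurable]
    exact H.ball_lt_top x _ (by positivity)
  · rw [eq_univ_iff_forall]
    intro y
    obtain ⟨n, hn⟩ := exists_nat_gt (dist y x)
    refine mem_iUnion.2 ⟨n, subset_toMeasurable _ _ ?_⟩
    rw [mem_ball]; linarith

lemma V_pos (x : M) (r : ℝ) (hr : 0 < r) : 0 < H.V x r :=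
  ENNReal.toReal_pos (H.ball_pos x r hr).ne' (H.ball_lt_top x r hr).ne

lemma V_mono (x : M) {r s : ℝ} (hs : 0 < s) (h : r ≤ s) : H.V x r ≤ H.V x s :=
  ENNReal.toReal_mono (H.ball_lt_top x s hs).ne (measure_mono (ball_subset_ball h))

lemma V_doubling (x : M) (r : ℝ) (hr : 0 < r) (n : ℕ) :
    H.V x (2 ^ n * r) ≤ (max H.C_D 1) ^ n * H.V x r := by
  have h := H.doubling_iter x r hr n
  have h2 := ENNReal.toReal_mono (ENNReal.mul_ne_top (ENNReal.pow_ne_top ENNReal.ofReal_ne_top)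
    (H.ball_lt_top x r hr).ne) h
  rw [ENNReal.toReal_mul, ENNReal.toReal_pow, ENNReal.toReal_ofReal H.C_D_pos.le] at h2
  refine h2.trans ?_
  have := (H.V_pos x r hr).le
  have := H.C_D_pos.le
  unfold V at *
  gcongr
  exact le_max_left _ _

lemma summable_aux (A c : ℝ) (hA : 1 ≤ A) (hc : 0 < c) :
    Summable (fun k : ℕ => A ^ (2 * k + 1) * Real.exp (-(c / 4) * (4 ^ k - 1))) := by
  have hA0 : 0 < A := by linarith
  apply summable_of_ratio_test_tendsto_lt_one (l := 0) one_pos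
  · exact Filter.Eventually.of_forall fun k => by positivity
  · have h1 : Filter.Tendsto (fun k : ℕ => A ^ 2 * Real.exp (-(3 * c / 4) * 4 ^ k))
        Filter.atTop (nhds (A ^ 2 * 0)) := by
      apply Filter.Tendsto.const_mul
      apply Real.tendsto_exp_atBot.comp
      have h4 : Filter.Tendsto (fun k : ℕ => (4 : ℝ) ^ k) Filter.atTop Filter.atTop :=
        tendsto_pow_atTop_atTop_of_one_lt (by norm_num)
      exact h4.const_mul_atTop_of_neg (by linarith)
    rw [mul_zero] at h1
    refine h1.congr fun k => ?_
    rw [Real.norm_of_nonneg (by positivity), Real.norm_of_nonneg (by positivity)]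
    rw [mul_div_mul_comm, ← Real.exp_sub]
    congr 1
    · rw [eq_div_iff (by positivity)]; ring
    · congr 1; ring

lemma gauss_majorant (c : ℝ) (hc : 0 < c) : ∃ K : ℝ, 0 < K ∧ ∀ (x : M) (r : ℝ), 0 < r →
    ∃ Φ : M → ℝ≥0∞, Measurable Φ ∧ ∫⁻ y, Φ y ∂H.μ ≤ ENNReal.ofReal K ∧
      ∀ y, ENNReal.ofReal (1 / Real.sqrt (H.V x r * H.V y r) *
        Real.exp (-c * dist x y ^ 2 / r ^ 2)) ≤ Φ y := by
  set A := max H.C_D 1 with hA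
  have hA1 : 1 ≤ A := le_max_right _ _
  have hA0 : 0 < A := by linarith
  have hsum := summable_aux A c hA1 hc
  set E : ℕ → ℝ := fun k => Real.exp (-(c / 4) * (4 ^ k - 1)) with hE
  have hE0 : ∀ k, 0 < E k := fun k => Real.exp_pos _
  refine ⟨∑' k : ℕ, A ^ (2 * k + 1) * E k, ?_, ?_⟩
  · exact hsum.tsum_pos (fun k => by positivity) 0 (by positivity)
  intro x r hr
  have hV := H.V_pos x r hr
  refine ⟨fun y => ∑' k : ℕ, (toMeasurable H.μ (ball x (2 ^ k * r))).indicator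
    (fun _ => ENNReal.ofReal (A ^ (k + 1) * E k / H.V x r)) y, ?_, ?_, ?_⟩
  · refine Measurable.tsum (fun k => ?_)
    exact measurable_const.indicator (measurableSet_toMeasurable _ _)
  · rw [lintegral_tsum (fun k =>
      (measurable_const.indicator (measurableSet_toMeasurable _ _)).aemeasurable)]
    rw [ENNReal.ofReal_tsum_of_nonneg (fun k => by positivity) hsum]
    refine ENNReal.tsum_le_tsum fun k => ?_
    rw [lintegral_indicator_const (measurableSet_toMeasurable _ _), measure_toMeasurable]
    rw [← ENNReal.ofReal_toReal (H.ball_lt_top x (2 ^ k * r) (by positivity)).ne,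
      ← ENNReal.ofReal_mul (by positivity)]
    apply ENNReal.ofReal_le_ofReal
    have := H.V_doubling x r hr k
    calc A ^ (k + 1) * E k / H.V x r * H.V x (2 ^ k * r)
        ≤ A ^ (k + 1) * E k / H.V x r * (A ^ k * H.V x r) := by
          have := hE0 k
          gcongr
      _ = A ^ (2 * k + 1) * E k := by field_simp; ring
  · intro y
    have hVy := H.V_pos y r hr
    classical
    have hex := exists_pow_gt r hr (dist y x)
    set k := Nat.find hex with hk
    have hk1 : dist y x < 2 ^ k * r := Nat.find_spec hex
    refine le_trans ?_ (ENNReal.le_tsum k)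
    rw [indicator_of_mem (subset_toMeasurable _ _ (by exact hk1))]
    apply ENNReal.ofReal_le_ofReal
    have h1 : Real.exp (-c * dist x y ^ 2 / r ^ 2) ≤ E k := by
      apply Real.exp_le_exp.2
      rcases Nat.eq_zero_or_pos k with h0 | h0
      · rw [h0]; simp; 
        rw [neg_div]
        simp; positivity
      · have h2 := Nat.find_min hex (m := k - 1) (by omega)
        push Not at h2
        have h3 : (2 ^ (k-1) * r) ^ 2 ≤ dist x y ^ 2 := by
          rw [dist_comm x y]; gcongr
        have h4 : (4 : ℝ) ^ k = 4 * (2 ^ (k-1)) ^ 2 := by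
          obtain ⟨j, hj⟩ : ∃ j, k = j + 1 := ⟨k - 1, by omega⟩
          rw [hj]; simp
          rw [← pow_mul, mul_comm j 2, pow_mul]; norm_num; ring
        rw [div_le_iff₀ (by positivity), h4]
        have h5 : c * (2 ^ (k-1) * r) ^ 2 ≤ c * dist x y ^ 2 := by gcongr
        nlinarith [mul_pos hc (pow_pos hr 2)]
    have h2 : H.V x r ≤ A ^ (k + 1) * H.V y r := by
      refine le_trans ?_ (H.V_doubling y r hr (k + 1))
      apply ENNReal.toReal_mono (H.ball_lt_top y _ (by positivity)).ne
      apply measure_mono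
      apply ball_subset_ball'
      have : (1 : ℝ) ≤ 2 ^ k := one_le_pow₀ (by norm_num)
      rw [dist_comm, pow_succ]
      nlinarith
    have h3 : 1 / Real.sqrt (H.V x r * H.V y r) ≤ A ^ (k + 1) / H.V x r := by
      rw [div_le_div_iff₀ (by positivity) hV, one_mul]
      have h4 : (H.V x r) = Real.sqrt (H.V x r * H.V x r) := by
        rw [Real.sqrt_mul_self hV.le]
      have h5 : A ^ (k+1) * Real.sqrt (H.V x r * H.V y r)
          = Real.sqrt ((A ^ (k+1)) ^ 2 * (H.V x r * H.V y r)) := by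
        rw [Real.sqrt_mul (sq_nonneg (A ^ (k+1))), Real.sqrt_sq (by positivity)]
      rw [h5]
      conv_lhs => rw [h4]
      apply Real.sqrt_le_sqrt
      have h6 : (1 : ℝ) ≤ A ^ (k + 1) := one_le_pow₀ hA1
      calc H.V x r * H.V x r ≤ H.V x r * (A ^ (k + 1) * H.V y r) := by gcongr
        _ = A ^ (k+1) * 1 * (H.V x r * H.V y r) := by ring
        _ ≤ A ^ (k+1) * A ^ (k+1) * (H.V x r * H.V y r) := by gcongr
        _ = _ := by ring
    calc _ ≤ A ^ (k + 1) / H.V x r * E k := by gcongr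
      _ = _ := by ring

lemma kernel_majorant (m : ℕ) : ∃ K : ℝ, 0 < K ∧ ∀ (T : ℝ), 0 < T → ∀ x : M,
    ∃ φ : M → ℝ, Integrable φ H.μ ∧ ∫ y, φ y ∂H.μ ≤ K / T ^ m ∧
      ∀ᵐ y ∂H.μ, ∀ t, T ≤ t → t ≤ 4 * T → t ≤ 1 → |H.q m t x y| ≤ φ y := by
  obtain ⟨C, hC, c, hc, hU⟩ := H.UE m
  obtain ⟨K, hK, hΦ⟩ := H.gauss_majorant (c / 4) (by positivity)
  refine ⟨C * K, by positivity, ?_⟩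
  intro T hT x
  have hr : 0 < Real.sqrt T := Real.sqrt_pos.2 hT
  obtain ⟨Φ, hm, hI, hb⟩ := hΦ x (Real.sqrt T) hr
  have hIfin : ∫⁻ y, Φ y ∂H.μ ≠ ⊤ := (hI.trans_lt ENNReal.ofReal_lt_top).ne
  refine ⟨fun y => C / T ^ m * (Φ y).toReal, ?_, ?_, ?_⟩
  · exact (integrable_toReal_of_lintegral_ne_top hm.aemeasurable hIfin).const_mul _
  · rw [integral_const_mul, integral_toReal hm.aemeasurable (ae_lt_top hm hIfin)]
    have h1 : (∫⁻ y, Φ y ∂H.μ).toReal ≤ K :=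
      ENNReal.toReal_le_of_le_ofReal hK.le hI
    calc C / T ^ m * (∫⁻ y, Φ y ∂H.μ).toReal ≤ C / T ^ m * K := by gcongr
      _ = _ := by ring
  · filter_upwards [ae_lt_top hm hIfin] with y hy t h1 h2 h3
    have ht : 0 < t := by linarith
    have h4 := hU t ht h3 x y
    rw [abs_mul, abs_of_pos (pow_pos ht m)] at h4
    have h5 := hb y
    rw [← ENNReal.ofReal_toReal hy.ne, ENNReal.ofReal_le_ofReal_iff ENNReal.toReal_nonneg] at h5
    rw [Real.sq_sqrt hT.le] at h5
    have hs : Real.sqrt T ≤ Real.sqrt t := Real.sqrt_le_sqrt h1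
    have hst : 0 < Real.sqrt t := Real.sqrt_pos.2 ht
    have hx := H.V_mono x hst hs
    have hyy := H.V_mono y hst hs
    have hx0 := H.V_pos x _ hr
    have hy0 := H.V_pos y _ hr
    have h6 : C / Real.sqrt (H.V x (Real.sqrt t) * H.V y (Real.sqrt t)) *
        Real.exp (-c * dist x y ^ 2 / t) ≤ C * (Φ y).toReal := by
      calc _ ≤ C / Real.sqrt (H.V x (Real.sqrt T) * H.V y (Real.sqrt T)) *
            Real.exp (-(c/4) * dist x y ^ 2 / T) := by
              gcongr ?_ * ?_
              · have := hx0.le.trans hx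
                gcongr
              · apply Real.exp_le_exp.2
                rw [div_le_div_iff₀ ht hT]
                have : 0 ≤ c * dist x y ^ 2 := by positivity
                nlinarith
        _ = C * (1 / Real.sqrt (H.V x (Real.sqrt T) * H.V y (Real.sqrt T)) *
            Real.exp (-(c/4) * dist x y ^ 2 / T)) := by ring
        _ ≤ _ := by gcongr
    have h7 : t ^ m * |H.q m t x y| ≤ C * (Φ y).toReal := h4.trans h6
    rw [div_mul_eq_mul_div, le_div_iff₀ (by positivity)]
    calc |H.q m t x y| * T ^ m ≤ |H.q m t x y| * t ^ m := by gcongr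
      _ ≤ _ := by rw [mul_comm]; exact h7


/-- Bounded measurable functions with explicit bound. -/
def BM (B : ℝ) (f : M → ℝ) : Prop := Measurable f ∧ ∀ x, |f x| ≤ B

lemma supNorm_lt_top {B : ℝ} {f : M → ℝ} (h : ∀ x, |f x| ≤ B) : supNorm f < ⊤ := by
  refine lt_of_le_of_lt (iSup_le fun x => ?_) (ENNReal.ofReal_lt_top (r := B))
  rw [← enorm_eq_nnnorm, ← ofReal_norm]
  exact ENNReal.ofReal_le_ofReal (h x)

/-- The constants in the L^1 kernel bounds. -/
def K (m : ℕ) : ℝ := Classical.choose (H.kernel_majorant m)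

lemma K_pos (m : ℕ) : 0 < H.K m := (Classical.choose_spec (H.kernel_majorant m)).1

lemma K_spec (m : ℕ) (T : ℝ) (hT : 0 < T) (x : M) :
    ∃ φ : M → ℝ, Integrable φ H.μ ∧ ∫ y, φ y ∂H.μ ≤ H.K m / T ^ m ∧
      ∀ᵐ y ∂H.μ, ∀ t, T ≤ t → t ≤ 4 * T → t ≤ 1 → |H.q m t x y| ≤ φ y :=
  (Classical.choose_spec (H.kernel_majorant m)).2 T hT x

lemma q_hasDeriv (m : ℕ) (t : ℝ) (ht : 0 < t) (x y : M) :
    HasDerivAt (fun s => H.q m s x y) (H.q (m + 1) t x y) t := by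
  have h := (H.smooth x y m t ht).hasDerivAt
  unfold q
  rw [iteratedDeriv_succ]
  exact h

lemma q_meas (m : ℕ) (t : ℝ) (ht : 0 < t) : Measurable (Function.uncurry (H.q m t)) := by
  induction m generalizing t with
  | zero =>
    have := H.p_meas t ht
    simpa [q, Function.uncurry_def] using this
  | succ m ih =>
    have h1 : ∀ n : ℕ, Measurable (fun z : M × M =>
        ((n : ℝ) + 1) * (H.q m (t + 1 / ((n : ℝ) + 1)) z.1 z.2 - H.q m t z.1 z.2)) := by
      intro n
      exact ((ih (t + 1 / ((n : ℝ) + 1)) (by positivity)).sub (ih t ht)).const_mul _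
    refine measurable_of_tendsto_metrizable h1 ?_
    rw [tendsto_pi_nhds]
    rintro ⟨x, y⟩
    have h2 := (H.q_hasDeriv m t ht x y).tendsto_slope
    have h3 : Filter.Tendsto (fun n : ℕ => t + 1 / ((n : ℝ) + 1)) Filter.atTop (nhdsWithin t {t}ᶜ) := by
      apply tendsto_nhdsWithin_of_tendsto_nhds_of_eventually_within
      · simpa using tendsto_one_div_add_atTop_nhds_zero_nat.const_add t
      · refine Filter.Eventually.of_forall fun n => ?_
        have : 0 < 1 / ((n : ℝ) + 1) := by positivity
        simp only [mem_compl_iff, mem_singleton_iff]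
        linarith
    refine (h2.comp h3).congr fun n => ?_
    simp [slope_def_field]
    ring

lemma q_meas_right (m : ℕ) (t : ℝ) (ht : 0 < t) (x : M) : Measurable (H.q m t x) :=
  (H.q_meas m t ht).comp measurable_prodMk_left

lemma q_L1 (m : ℕ) (t : ℝ) (ht : 0 < t) (ht1 : t ≤ 1) (x : M) :
    Integrable (H.q m t x) H.μ ∧ ∫ y, |H.q m t x y| ∂H.μ ≤ H.K m / t ^ m := by
  obtain ⟨φ, h1, h2, h3⟩ := H.K_spec m t ht x
  have h4 : ∀ᵐ y ∂H.μ, |H.q m t x y| ≤ φ y := by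
    filter_upwards [h3] with y hy
    exact hy t le_rfl (by linarith) ht1
  have h5 : Integrable (H.q m t x) H.μ :=
    h1.mono' (H.q_meas_right m t ht x).aestronglyMeasurable h4
  exact ⟨h5, (integral_mono_ae h5.abs h1 h4).trans h2⟩

lemma D_eq (m : ℕ) (t : ℝ) (ht : 0 < t) {B : ℝ} {f : M → ℝ} (hf : BM B f) (x : M) :
    H.D m t f x = ∫ y, H.q m t x y * f y ∂H.μ :=
  H.diff_under_int f hf.1 (supNorm_lt_top hf.2) m x t ht

lemma mul_bound_int {B : ℝ} {f u : M → ℝ} (hf : BM B f) (hu : Integrable u H.μ) :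
    Integrable (fun y => u y * f y) H.μ :=
  hu.mul_bdd (c := B) hf.1.aestronglyMeasurable (Filter.Eventually.of_forall hf.2)

lemma mul_bound_le {B : ℝ} {f u : M → ℝ} (hf : BM B f) (hu : Integrable u H.μ) :
    |∫ y, u y * f y ∂H.μ| ≤ (∫ y, |u y| ∂H.μ) * B := by
  rw [← integral_mul_const, ← Real.norm_eq_abs]
  refine norm_integral_le_of_norm_le (hu.abs.mul_const B) (Filter.Eventually.of_forall fun y => ?_)
  rw [norm_mul]
  exact mul_le_mul_of_nonneg_left (hf.2 y) (norm_nonneg _)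

lemma D_bound (m : ℕ) (t : ℝ) (ht : 0 < t) (ht1 : t ≤ 1) {B : ℝ} {f : M → ℝ} (hf : BM B f)
    (x : M) : |H.D m t f x| ≤ H.K m / t ^ m * B := by
  have hB : 0 ≤ B := (abs_nonneg _).trans (hf.2 x)
  rw [H.D_eq m t ht hf x]
  obtain ⟨h1, h2⟩ := H.q_L1 m t ht ht1 x
  refine (H.mul_bound_le hf h1).trans ?_
  gcongr

lemma D_meas (m : ℕ) (t : ℝ) (ht : 0 < t) {B : ℝ} {f : M → ℝ} (hf : BM B f) :
    Measurable (H.D m t f) := by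
  rcases isEmpty_or_nonempty M with h | ⟨⟨x0⟩⟩
  · exact measurable_of_empty _
  have := H.sigmaFinite x0
  have : H.D m t f = fun x => ∫ y, H.q m t x y * f y ∂H.μ := by
    funext x; exact H.D_eq m t ht hf x
  rw [this]
  have h1 : StronglyMeasurable (fun z : M × M => H.q m t z.1 z.2 * f z.2) :=
    ((H.q_meas m t ht).mul (hf.1.comp measurable_snd)).stronglyMeasurable
  exact (h1.integral_prod_right').measurable

lemma p_int (t : ℝ) (ht : 0 < t) (x : M) : Integrable (H.p t x) H.μ := by
  by_contra h
  have := H.conservative t ht x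
  rw [integral_undef h] at this
  simp at this

lemma D_zero (t : ℝ) (f : M → ℝ) (x : M) : H.D 0 t f x = H.S t f x := by
  simp [D]

lemma S_BM (t : ℝ) (ht : 0 < t) {B : ℝ} {f : M → ℝ} (hf : BM B f) : BM B (H.S t f) := by
  refine ⟨?_, fun x => ?_⟩
  · have := H.D_meas 0 t ht hf
    convert this using 1
    funext x; rw [D_zero]
  · refine (H.mul_bound_le hf (H.p_int t ht x)).trans ?_
    simp_rw [abs_of_nonneg (H.p_nonneg t ht x _), H.conservative t ht x, one_mul]
    exact le_rfl

lemma S_semigroup (s t : ℝ) (hs : 0 < s) (ht : 0 < t) {B : ℝ} {f : M → ℝ} (hf : BM B f) (x : M) :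
    H.S (s + t) f x = H.S s (H.S t f) x := by
  have := H.sigmaFinite x
  unfold S
  have hm : Measurable (fun z : M × M => H.p s x z.1 * (H.p t z.1 z.2 * f z.2)) :=
    ((H.p_meas s hs).comp (measurable_const.prodMk measurable_fst)).mul
      ((H.p_meas t ht).mul (hf.1.comp measurable_snd))
  have hint : Integrable (fun z : M × M => H.p s x z.1 * (H.p t z.1 z.2 * f z.2))
      (H.μ.prod H.μ) := by
    rw [integrable_prod_iff hm.aestronglyMeasurable]
    refine ⟨Filter.Eventually.of_forall fun y =>
      (H.mul_bound_int hf (H.p_int t ht y)).const_mul (H.p s x y), ?_⟩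
    have hb : Integrable (fun y => H.p s x y * B) H.μ := (H.p_int s hs x).mul_const B
    refine hb.mono' hm.norm.stronglyMeasurable.integral_prod_right'.aestronglyMeasurable
      (Filter.Eventually.of_forall fun y => ?_)
    simp_rw [norm_mul]
    rw [integral_const_mul, norm_mul, norm_norm, Real.norm_of_nonneg (H.p_nonneg s hs x y)]
    refine mul_le_mul_of_nonneg_left ?_ (H.p_nonneg s hs x y)
    rw [Real.norm_of_nonneg (integral_nonneg fun z => by positivity)]
    calc ∫ z, ‖H.p t y z‖ * ‖f z‖ ∂H.μ ≤ ∫ z, H.p t y z * B ∂H.μ := by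
          refine integral_mono_of_nonneg (Filter.Eventually.of_forall fun z => by positivity)
            ((H.p_int t ht y).mul_const B) (Filter.Eventually.of_forall fun z => ?_)
          simp only [Real.norm_of_nonneg (H.p_nonneg t ht y z)]
          exact mul_le_mul_of_nonneg_left (hf.2 z) (H.p_nonneg t ht y z)
      _ = B := by rw [integral_mul_const, H.conservative t ht y, one_mul]
  have h1 : ∀ z, H.p (s + t) x z * f z = ∫ y, H.p s x y * (H.p t y z * f z) ∂H.μ := by
    intro z
    rw [H.semigroup s t hs ht, ← integral_mul_const]
    congr 1; funext y; ring
  simp_rw [h1]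
  rw [integral_integral_swap (f := fun z y => H.p s x y * (H.p t y z * f z)) hint.swap]
  simp_rw [integral_const_mul]

lemma D_shift (m : ℕ) (s r : ℝ) (hr : 0 < r) (hs : r < s) {B : ℝ} {f : M → ℝ} (hf : BM B f)
    (x : M) : H.D m s f x = H.D m (s - r) (H.S r f) x := by
  have h1 : (fun s => H.S s f x) =ᶠ[nhds s] (fun s => H.S (s - r) (H.S r f) x) := by
    filter_upwards [lt_mem_nhds hs] with u hu
    rw [← H.S_semigroup (u - r) r (by linarith) hr hf]
    congr 1; ring
  unfold D
  rw [h1.iteratedDeriv_eq m]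
  exact congrFun (iteratedDeriv_comp_sub_const m (fun s => H.S s (H.S r f) x) r) s

lemma D_hasDeriv_lt (m : ℕ) (t : ℝ) (ht : 0 < t) (ht1 : t < 1) {B : ℝ} {f : M → ℝ} (hf : BM B f)
    (x : M) : HasDerivAt (fun s => H.D m s f x) (H.D (m + 1) t f x) t := by
  obtain ⟨φ, h1, h2, h3⟩ := H.K_spec (m + 1) (t / 2) (by linarith) x
  have hB : 0 ≤ B := (abs_nonneg _).trans (hf.2 x)
  have hnb : Ioo (t / 2) (min 1 (2 * t)) ∈ nhds t :=
    Ioo_mem_nhds (by linarith) (lt_min ht1 (by linarith))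
  have key := hasDerivAt_integral_of_dominated_loc_of_deriv_le (μ := H.μ) (𝕜 := ℝ)
    (F := fun s y => H.q m s x y * f y) (F' := fun s y => H.q (m + 1) s x y * f y)
    (x₀ := t) (s := Ioo (t / 2) (min 1 (2 * t))) (bound := fun y => φ y * B) hnb
    (by
      filter_upwards [hnb] with u hu
      exact ((H.q_meas_right m u (by linarith [hu.1]) x).mul hf.1).aestronglyMeasurable)
    (H.mul_bound_int hf (H.q_L1 m t ht ht1.le x).1)
    ((H.q_meas_right (m+1) t ht x).mul hf.1).aestronglyMeasurable
    (by
      filter_upwards [h3] with y hy u hu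
      rw [norm_mul]
      have h5 := hy u hu.1.le (by linarith [hu.2.le.trans (min_le_right _ _)])
        (hu.2.le.trans (min_le_left _ _))
      exact mul_le_mul h5 (hf.2 y) (norm_nonneg _) ((abs_nonneg _).trans h5))
    (h1.mul_const B)
    (by
      refine Filter.Eventually.of_forall fun y u hu => ?_
      exact (H.q_hasDeriv m u (by linarith [hu.1]) x y).mul_const _)
  rw [H.D_eq (m+1) t ht hf x]
  refine key.2.congr_of_eventuallyEq ?_
  filter_upwards [lt_mem_nhds ht] with u hu
  exact H.D_eq m u hu hf x

lemma D_hasDeriv (m : ℕ) (t : ℝ) (ht : 0 < t) {B : ℝ} {f : M → ℝ} (hf : BM B f)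
    (x : M) : HasDerivAt (fun s => H.D m s f x) (H.D (m + 1) t f x) t := by
  rcases lt_or_ge t 1 with ht1 | ht1
  · exact H.D_hasDeriv_lt m t ht ht1 hf x
  have hr : 0 < t - 1 / 2 := by linarith
  have hS := H.S_BM _ hr hf
  have h1 := H.D_hasDeriv_lt m (t - (t - 1 / 2)) (by linarith) (by linarith) hS x
  rw [H.D_shift (m+1) t (t - 1/2) hr (by linarith) hf x]
  have h2 := h1.comp_sub_const t (t - 1/2)
  refine h2.congr_of_eventuallyEq ?_
  filter_upwards [lt_mem_nhds (by linarith : t - 1/2 < t)] with u hu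
  exact H.D_shift m u (t - 1/2) hr hu hf x

lemma D_bound_add (m : ℕ) (s t : ℝ) (hs : 0 < s) (hs1 : s ≤ 1) (ht : 0 < t) {B : ℝ} {f : M → ℝ}
    (hf : BM B f) (x : M) : |H.D m (s + t) f x| ≤ H.K m / s ^ m * B := by
  rw [H.D_shift m (s + t) t ht (by linarith) hf x, add_sub_cancel_right]
  exact H.D_bound m s hs hs1 (H.S_BM t ht hf) x

lemma D_bound_ge (m : ℕ) (s t : ℝ) (hs : 0 < s) (hs1 : s ≤ 1) (ht : s ≤ t) {B : ℝ} {f : M → ℝ}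
    (hf : BM B f) (x : M) : |H.D m t f x| ≤ H.K m / s ^ m * B := by
  rcases ht.eq_or_lt with h | h
  · rw [← h]; exact H.D_bound m s hs hs1 hf x
  · have := H.D_bound_add m s (t - s) hs hs1 (by linarith) hf x
    rwa [add_sub_cancel] at this

lemma D_BM (m : ℕ) (t : ℝ) (ht : 0 < t) {B : ℝ} {f : M → ℝ} (hf : BM B f) :
    BM (H.K m / (min t 1) ^ m * B) (H.D m t f) :=
  ⟨H.D_meas m t ht hf, fun x => H.D_bound_ge m _ t (lt_min ht one_pos) (min_le_right _ _)
    (min_le_left _ _) hf x⟩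

lemma S_D (k : ℕ) (s t : ℝ) (hs : 0 < s) (ht : 0 < t) {B : ℝ} {f : M → ℝ} (hf : BM B f)
    (x : M) : H.S s (H.D k t f) x = H.D k (s + t) f x := by
  induction k generalizing t with
  | zero =>
    rw [D_zero, H.S_semigroup s t hs ht hf]
    congr 1
  | succ k ih =>
    have hnb : Ioi (t / 2) ∈ nhds t := Ioi_mem_nhds (by linarith)
    set c := min (t / 2) 1 with hc
    have hc0 : 0 < c := lt_min (by linarith) one_pos
    have key := hasDerivAt_integral_of_dominated_loc_of_deriv_le (μ := H.μ) (𝕜 := ℝ)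
      (F := fun u y => H.p s x y * H.D k u f y) (F' := fun u y => H.p s x y * H.D (k + 1) u f y)
      (x₀ := t) (s := Ioi (t / 2)) (bound := fun y => H.p s x y * (H.K (k+1) / c ^ (k+1) * B)) hnb
      (by
        filter_upwards [hnb] with u hu
        rw [mem_Ioi] at hu
        exact (H.mul_bound_int (H.D_BM k u (by linarith) hf) (H.p_int s hs x)).aestronglyMeasurable)
      (H.mul_bound_int (H.D_BM k t ht hf) (H.p_int s hs x))
      (H.mul_bound_int (H.D_BM (k+1) t ht hf) (H.p_int s hs x)).aestronglyMeasurable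
      (by
        refine Filter.Eventually.of_forall fun y u hu => ?_
        rw [norm_mul, Real.norm_of_nonneg (H.p_nonneg s hs x y)]
        refine mul_le_mul_of_nonneg_left ?_ (H.p_nonneg s hs x y)
        exact H.D_bound_ge (k+1) c u hc0 (min_le_right _ _) ((min_le_left _ _).trans (le_of_lt hu)) hf y)
      ((H.p_int s hs x).mul_const _)
      (by
        refine Filter.Eventually.of_forall fun y u hu => ?_
        rw [mem_Ioi] at hu
        exact (H.D_hasDeriv k u (by linarith) hf y).const_mul _)
    have h2 := (H.D_hasDeriv k (s + t) (by linarith) hf x).comp_const_add s t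
    refine (key.2.congr_of_eventuallyEq ?_).unique h2
    filter_upwards [hnb] with u hu
    rw [mem_Ioi] at hu
    exact (ih u (by linarith)).symm

lemma D_D (j k : ℕ) (s t : ℝ) (hs : 0 < s) (ht : 0 < t) {B : ℝ} {f : M → ℝ} (hf : BM B f)
    (x : M) : H.D j s (H.D k t f) x = H.D (j + k) (s + t) f x := by
  induction j generalizing s with
  | zero => rw [D_zero, H.S_D k s t hs ht hf, zero_add]
  | succ j ih =>
    have h1 := H.D_hasDeriv j s hs (H.D_BM k t ht hf) x
    have h2 := (H.D_hasDeriv (j + k) (s + t) (by linarith) hf x).comp_add_const s t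
    rw [show j + 1 + k = j + k + 1 by ring]
    refine (h1.congr_of_eventuallyEq ?_).unique h2
    filter_upwards [lt_mem_nhds hs] with u hu
    exact (ih u hu).symm

lemma integrate_one_sided (w w' : ℝ → ℝ) (e A t : ℝ) (he : e < 0) (hA : 0 ≤ A) (ht : 0 < t)
    (ht1 : t ≤ 1) (hw : ∀ r, t ≤ r → r ≤ 1 → HasDerivAt w (w' r) r)
    (hb : ∀ r, t ≤ r → r ≤ 1 → |w' r| ≤ A * r ^ (e - 1)) :
    w 1 ≤ w t + A / (-e) * t ^ e := by
  have hder : ∀ r, t ≤ r → r ≤ 1 → HasDerivAt (fun r => w r + A / (-e) * r ^ e)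
      (w' r + A / (-e) * (e * r ^ (e - 1))) r := by
    intro r h1 h2
    exact (hw r h1 h2).add ((Real.hasDerivAt_rpow_const (Or.inl (by linarith))).const_mul _)
  have hanti : AntitoneOn (fun r => w r + A / (-e) * r ^ e) (Icc t 1) := by
    apply antitoneOn_of_deriv_nonpos (convex_Icc t 1)
    · intro r hr
      exact (hder r hr.1 hr.2).continuousAt.continuousWithinAt
    · intro r hr
      rw [interior_Icc] at hr
      exact (hder r hr.1.le hr.2.le).differentiableAt.differentiableWithinAt
    · intro r hr
      rw [interior_Icc] at hr
      rw [(hder r hr.1.le hr.2.le).deriv]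
      have h1 := (le_abs_self _).trans (hb r hr.1.le hr.2.le)
      have h2 : A / (-e) * (e * r ^ (e - 1)) = - (A * r ^ (e - 1)) := by
        have := he.ne
        field_simp
      linarith
  have h := hanti (left_mem_Icc.2 ht1) (right_mem_Icc.2 ht1) ht1
  simp only [Real.one_rpow] at h
  have : 0 ≤ A / (-e) * 1 := by
    have : 0 < -e := by linarith
    positivity
  linarith

lemma integrate_bound (w w' : ℝ → ℝ) (e A t : ℝ) (he : e < 0) (hA : 0 ≤ A) (ht : 0 < t)
    (ht1 : t ≤ 1) (hw : ∀ r, t ≤ r → r ≤ 1 → HasDerivAt w (w' r) r)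
    (hb : ∀ r, t ≤ r → r ≤ 1 → |w' r| ≤ A * r ^ (e - 1)) :
    |w t| ≤ |w 1| + A / (-e) * t ^ e := by
  have h1 := integrate_one_sided w w' e A t he hA ht ht1 hw hb
  have h2 := integrate_one_sided (fun r => - w r) (fun r => - w' r) e A t he hA ht ht1
    (fun r h1 h2 => (hw r h1 h2).neg) (fun r h1 h2 => by rw [abs_neg]; exact hb r h1 h2)
  rw [abs_le]
  constructor
  · linarith [neg_abs_le (w 1)]
  · linarith [le_abs_self (w 1)]

/-- Interpolation: all derivatives are controlled by the Hölder data. -/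
lemma interp (a : ℕ) (σ : ℝ) (n : ℕ) : ∀ k : ℕ, a ≤ k + n → (k < a → σ / 2 < k) →
    ∃ C, 0 < C ∧ ∀ (f : M → ℝ) (B N : ℝ), BM B f → 0 ≤ N → (∀ x, |H.S 1 f x| ≤ N) →
      (∀ t, 0 < t → t ≤ 1 → ∀ x, |H.D a t f x| ≤ t ^ (σ / 2 - a) * N) →
      ∀ t, 0 < t → t ≤ 1 → ∀ x, |H.D k t f x| ≤ C * t ^ (σ / 2 - k) * N := by
  induction n with
  | zero =>
    intro k hk _
    refine ⟨H.K (k - a) * (1 / 2) ^ (σ / 2 - k), mul_pos (H.K_pos _) (by positivity), ?_⟩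
    intro f B N hf hN h1 ha t ht ht1 x
    have ht2 : 0 < t / 2 := by linarith
    have hBM : BM ((t/2) ^ (σ / 2 - a) * N) (H.D a (t/2) f) :=
      ⟨H.D_meas a _ ht2 hf, ha _ ht2 (by linarith)⟩
    have h2 := H.D_bound (k - a) (t/2) ht2 (by linarith) hBM x
    rw [H.D_D (k - a) a (t/2) (t/2) ht2 ht2 hf, add_halves, Nat.sub_add_cancel (by omega)] at h2
    refine h2.trans (le_of_eq ?_)
    have h3 : (t/2) ^ (σ/2 - a) = (t/2) ^ (σ/2 - k) * (t/2)^(k - a) := by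
      rw [← Real.rpow_natCast, ← Real.rpow_add ht2]
      congr 1
      rw [Nat.cast_sub (by omega)]; ring
    have h4 : (t/2) ^ (σ/2 - (k : ℝ)) = t ^ (σ/2 - (k : ℝ)) * (1 / 2) ^ (σ/2 - (k : ℝ)) := by
      rw [← Real.mul_rpow ht.le (by norm_num)]; congr 1; ring
    rw [h3, h4]
    have : (t/2)^(k-a) ≠ 0 := by positivity
    field_simp
  | succ n ih =>
    intro k hk hσ
    rcases Nat.lt_or_ge k a with hka | hka
    swap
    · exact ih k (by omega) hσ
    have hσ := hσ hka
    obtain ⟨C, hC, hCf⟩ := ih (k + 1) (by omega) (fun _ => by push_cast; linarith)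
    have he : σ / 2 - k < 0 := by linarith
    have he' : 0 < -(σ / 2 - k) := by linarith
    refine ⟨H.K k + C + C / (-(σ / 2 - k)), by have := H.K_pos k; positivity, ?_⟩
    intro f B N hf hN h1 ha t ht ht1 x
    have hC1 := hCf f B N hf hN h1 ha
    -- the value at time 1
    have hone : |H.D k 1 f x| ≤ (H.K k + C) * N := by
      have hBM1 : BM (C * N) (H.D (k+1) 1 f) := by
        refine ⟨H.D_meas (k+1) 1 one_pos hf, fun y => ?_⟩
        simpa using hC1 1 one_pos le_rfl y
      have hder : ∀ r ∈ Icc (1:ℝ) 2, ‖H.D (k+1) r f x‖ ≤ C * N := by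
        intro r hr
        rcases hr.1.eq_or_lt with h | h
        · rw [← h]; exact hBM1.2 x
        · have h3 := H.S_D (k+1) (r - 1) 1 (by linarith) one_pos hf x
          rw [sub_add_cancel] at h3
          rw [← h3]
          exact (H.S_BM (r-1) (by linarith) hBM1).2 x
      have hmv := (convex_Icc (1:ℝ) 2).norm_image_sub_le_of_norm_hasDerivWithin_le
        (f := fun r => H.D k r f x) (f' := fun r => H.D (k+1) r f x) (C := C * N)
        (fun r hr => (H.D_hasDeriv k r (by linarith [hr.1]) hf x).hasDerivWithinAt) hder
        (right_mem_Icc.2 (by norm_num)) (left_mem_Icc.2 (by norm_num))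
      have h2 : |H.D k 2 f x| ≤ H.K k * N := by
        rw [H.D_shift k 2 1 one_pos (by norm_num) hf x]
        have := H.D_bound k (2 - 1) (by norm_num) (by norm_num)
          (⟨(H.S_BM 1 one_pos hf).1, h1⟩ : BM N (H.S 1 f)) x
        norm_num at this ⊢
        exact this
      rw [Real.norm_eq_abs, Real.norm_eq_abs] at hmv
      norm_num at hmv
      have h5 : |H.D k 1 f x| ≤ |H.D k 1 f x - H.D k 2 f x| + |H.D k 2 f x| := by
        have := abs_add_le (H.D k 1 f x - H.D k 2 f x) (H.D k 2 f x)
        simpa using this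
      linarith
    have hint := integrate_bound (fun r => H.D k r f x) (fun r => H.D (k+1) r f x) (σ/2 - k)
      (C * N) t he (by positivity) ht ht1
      (fun r h1 h2 => H.D_hasDeriv k r (by linarith) hf x)
      (fun r h1 h2 => by
        have h3 := hC1 r (by linarith) h2 x
        refine h3.trans (le_of_eq ?_)
        push_cast
        rw [show σ / 2 - ((k:ℝ) + 1) = σ / 2 - k - 1 by ring]; ring)
    have hge : 1 ≤ t ^ (σ / 2 - (k:ℝ)) :=
      Real.one_le_rpow_of_pos_of_le_one_of_nonpos ht ht1 he.le
    have hK := H.K_pos k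
    calc |H.D k t f x| ≤ (H.K k + C) * N * 1 + C * N / (-(σ/2 - k)) * t ^ (σ/2 - (k:ℝ)) := by
          linarith
      _ ≤ (H.K k + C) * N * t ^ (σ/2 - (k:ℝ)) + C * N / (-(σ/2 - k)) * t ^ (σ/2 - (k:ℝ)) := by
          gcongr
      _ = _ := by ring

lemma interp' (a : ℕ) (σ : ℝ) (k : ℕ) (hk : σ / 2 < k) :
    ∃ C, 0 < C ∧ ∀ (f : M → ℝ) (B N : ℝ), BM B f → 0 ≤ N → (∀ x, |H.S 1 f x| ≤ N) →
      (∀ t, 0 < t → t ≤ 1 → ∀ x, |H.Q a t f x| ≤ t ^ (σ / 2) * N) →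
      ∀ t, 0 < t → t ≤ 1 → ∀ x, |t ^ k * H.D k t f x| ≤ C * t ^ (σ / 2) * N := by
  obtain ⟨C, hC, h⟩ := H.interp a σ a k (by omega) (fun _ => hk)
  refine ⟨C, hC, fun f B N hf hN h1 ha t ht ht1 x => ?_⟩
  have hsplit : ∀ (n : ℕ) (t : ℝ), 0 < t → t ^ (σ / 2) = t ^ n * t ^ (σ / 2 - n) := by
    intro n t ht
    rw [← Real.rpow_natCast, ← Real.rpow_add ht]; congr 1; ring
  have h2 := h f B N hf hN h1 (fun t ht ht1 x => by
    have h3 := ha t ht ht1 x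
    have h4 : |H.Q a t f x| = t ^ a * |H.D a t f x| := by
      unfold Q D
      rw [abs_mul, abs_mul, abs_pow, abs_neg, abs_one, one_pow, one_mul, abs_of_pos (pow_pos ht a)]
    rw [h4, hsplit a t ht, mul_assoc] at h3
    exact le_of_mul_le_mul_left h3 (pow_pos ht a)) t ht ht1 x
  rw [abs_mul, abs_of_pos (pow_pos ht k), hsplit k t ht]
  calc t ^ k * |H.D k t f x| ≤ t ^ k * (C * t ^ (σ / 2 - (k:ℝ)) * N) := by gcongr
    _ = _ := by ring

lemma comp_le (j k : ℕ) (hk : 1 ≤ k) (s t : ℝ) (hs1 : s ≤ 1) (ht : 0 < t)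
    (hts : t ≤ s) {B : ℝ} {h : M → ℝ} (hh : BM B h) (x : M) :
    |s ^ j * t ^ k * H.D j s (H.D k t h) x| ≤ H.K (j + k) * (t / s) * B := by
  have hs : 0 < s := by linarith
  have hB : 0 ≤ B := (abs_nonneg _).trans (hh.2 x)
  have hK := H.K_pos (j + k)
  rw [H.D_D j k s t hs ht hh, abs_mul, abs_of_pos (by positivity)]
  calc s ^ j * t ^ k * |H.D (j + k) (s + t) h x|
      ≤ s ^ j * t ^ k * (H.K (j + k) / s ^ (j + k) * B) := by
        gcongr; exact H.D_bound_add (j + k) s t hs hs1 ht hh x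
    _ = H.K (j + k) * (t / s) ^ k * B := by rw [pow_add, div_pow]; field_simp
    _ ≤ H.K (j + k) * (t / s) ^ 1 * B := by
        gcongr ?_ * ?_ * ?_
        exact pow_le_pow_of_le_one (by positivity) ((div_le_one hs).2 hts) hk
    _ = _ := by rw [pow_one]

lemma comp_ge (j k : ℕ) (hj : 1 ≤ j) (s t : ℝ) (hs : 0 < s) (ht1 : t ≤ 1)
    (hts : s ≤ t) {B : ℝ} {h : M → ℝ} (hh : BM B h) (x : M) :
    |s ^ j * t ^ k * H.D j s (H.D k t h) x| ≤ H.K (j + k) * (s / t) * B := by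
  have ht : 0 < t := by linarith
  have hB : 0 ≤ B := (abs_nonneg _).trans (hh.2 x)
  have hK := H.K_pos (j + k)
  rw [H.D_D j k s t hs ht hh, abs_mul, abs_of_pos (by positivity)]
  calc s ^ j * t ^ k * |H.D (j + k) (s + t) h x|
      ≤ s ^ j * t ^ k * (H.K (j + k) / t ^ (j + k) * B) := by
        gcongr; rw [add_comm s t]; exact H.D_bound_add (j + k) t s ht ht1 hs hh x
    _ = H.K (j + k) * (s / t) ^ j * B := by rw [pow_add, div_pow]; field_simp
    _ ≤ H.K (j + k) * (s / t) ^ 1 * B := by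
        gcongr ?_ * ?_ * ?_
        exact pow_le_pow_of_le_one (by positivity) ((div_le_one ht).2 hts) hj
    _ = _ := by rw [pow_one]

/-- Bounded measurable. -/
def Bd (f : M → ℝ) : Prop := ∃ B, BM B f

lemma Bd.add {f g : M → ℝ} (hf : Bd f) (hg : Bd g) : Bd (fun x => f x + g x) := by
  obtain ⟨A, hA⟩ := hf
  obtain ⟨B, hB⟩ := hg
  exact ⟨A + B, hA.1.add hB.1, fun x => (abs_add_le _ _).trans (add_le_add (hA.2 x) (hB.2 x))⟩

lemma Bd.mul {f g : M → ℝ} (hf : Bd f) (hg : Bd g) : Bd (fun x => f x * g x) := by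
  obtain ⟨A, hA⟩ := hf
  obtain ⟨B, hB⟩ := hg
  refine ⟨A * B, hA.1.mul hB.1, fun x => ?_⟩
  rw [abs_mul]
  exact mul_le_mul (hA.2 x) (hB.2 x) (abs_nonneg _) ((abs_nonneg _).trans (hA.2 x))

lemma Bd.smul {f : M → ℝ} (c : ℝ) (hf : Bd f) : Bd (fun x => c * f x) := by
  obtain ⟨A, hA⟩ := hf
  refine ⟨|c| * A, hA.1.const_mul c, fun x => ?_⟩
  rw [abs_mul]
  exact mul_le_mul_of_nonneg_left (hA.2 x) (abs_nonneg _)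

lemma Bd.sum (F : Finset ℕ) {f : ℕ → M → ℝ} (hf : ∀ i, Bd (f i)) :
    Bd (fun x => ∑ i ∈ F, f i x) := by
  induction F using Finset.induction_on with
  | empty => exact ⟨0, by simpa using measurable_const, by simp⟩
  | insert i F hi ih =>
    simp_rw [Finset.sum_insert hi]
    exact (hf i).add ih

lemma Bd.D (m : ℕ) (t : ℝ) (ht : 0 < t) {f : M → ℝ} (hf : Bd f) : Bd (H.D m t f) := by
  obtain ⟨B, hB⟩ := hf
  exact ⟨_, H.D_BM m t ht hB⟩

lemma D_eq' (m : ℕ) (t : ℝ) (ht : 0 < t) {f : M → ℝ} (hf : Bd f) (x : M) :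
    H.D m t f x = ∫ y, H.q m t x y * f y ∂H.μ := by
  obtain ⟨B, hB⟩ := hf
  exact H.D_eq m t ht hB x

lemma q_mul_int (m : ℕ) (t : ℝ) (ht : 0 < t) (ht1 : t ≤ 1) {f : M → ℝ} (hf : Bd f) (x : M) :
    Integrable (fun y => H.q m t x y * f y) H.μ := by
  obtain ⟨B, hB⟩ := hf
  exact H.mul_bound_int hB (H.q_L1 m t ht ht1 x).1

lemma D_add (m : ℕ) (t : ℝ) (ht : 0 < t) (ht1 : t ≤ 1) {f g : M → ℝ} (hf : Bd f) (hg : Bd g)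
    (x : M) : H.D m t (fun y => f y + g y) x = H.D m t f x + H.D m t g x := by
  rw [H.D_eq' m t ht (hf.add hg), H.D_eq' m t ht hf, H.D_eq' m t ht hg,
    ← integral_add (H.q_mul_int m t ht ht1 hf x) (H.q_mul_int m t ht ht1 hg x)]
  simp_rw [mul_add]

lemma D_smul (m : ℕ) (t : ℝ) (ht : 0 < t) (c : ℝ) {f : M → ℝ} (hf : Bd f)
    (x : M) : H.D m t (fun y => c * f y) x = c * H.D m t f x := by
  rw [H.D_eq' m t ht (hf.smul c), H.D_eq' m t ht hf, ← integral_const_mul]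
  congr 1; funext y; ring

lemma D_sum (m : ℕ) (t : ℝ) (ht : 0 < t) (ht1 : t ≤ 1) (F : Finset ℕ) {f : ℕ → M → ℝ}
    (hf : ∀ i, Bd (f i)) (x : M) :
    H.D m t (fun y => ∑ i ∈ F, f i y) x = ∑ i ∈ F, H.D m t (f i) x := by
  rw [H.D_eq' m t ht (Bd.sum F hf)]
  simp_rw [H.D_eq' m t ht (hf _)]
  rw [← integral_finsetSum _ (fun i _ => H.q_mul_int m t ht ht1 (hf i) x)]
  simp_rw [Finset.mul_sum]

lemma Bd.Q (a : ℕ) (t : ℝ) (ht : 0 < t) {f : M → ℝ} (hf : Bd f) : Bd (H.Q a t f) :=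
  (hf.D H a t ht).smul _

lemma Bd.P (a : ℕ) (t : ℝ) (ht : 0 < t) {f : M → ℝ} (hf : Bd f) : Bd (H.P a t f) :=
  Bd.sum _ fun k => (hf.D H k t ht).smul _

lemma Bd.LP (a : ℕ) (t : ℝ) (ht : 0 < t) {f : M → ℝ} (hf : Bd f) : Bd (H.LP a t f) :=
  Bd.sum _ fun k => (hf.D H (k + 1) t ht).smul _

lemma Bd.para (b : ℕ) (t : ℝ) (ht : 0 < t) {f g : M → ℝ} (hf : Bd f) (hg : Bd g) :
    Bd (H.paraInner b g f t) :=
  (((hf.Q H _ t ht).mul (hg.P H _ t ht)).LP H b t ht).add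
    (((hf.LP H _ t ht).mul (hg.P H _ t ht)).Q H _ t ht)

/-- The abstract estimate on `Q_s` applied to the sum of `LP_t h₁` and `Q_t h₂`. -/
lemma Q_para_le (j b : ℕ) (s t θ B : ℝ) (hs : 0 < s) (hs1 : s ≤ 1) (ht : 0 < t)
    {h₁ h₂ : M → ℝ} (hh₁ : Bd h₁) (hh₂ : Bd h₂) (x : M) (hθ : 0 ≤ θ) (hB : 0 ≤ B)
    (hc₁ : ∀ k, 1 ≤ k → |s ^ j * t ^ k * H.D j s (H.D k t h₁) x| ≤ H.K (j + k) * θ * B)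
    (hc₂ : |s ^ j * t ^ (b - 1) * H.D j s (H.D (b - 1) t h₂) x| ≤ H.K (j + (b - 1)) * θ * B) :
    |H.Q j s (fun y => H.LP b t h₁ y + H.Q (b - 1) t h₂ y) x| ≤
      (∑ k ∈ Finset.range b, H.K (j + (k + 1)) + H.K (j + (b - 1))) * (θ * B) := by
  have e1 : H.Q j s (fun y => H.LP b t h₁ y + H.Q (b - 1) t h₂ y) x
      = (-1) ^ j * s ^ j * H.D j s (fun y => H.LP b t h₁ y + H.Q (b - 1) t h₂ y) x := rfl
  rw [e1, H.D_add j s hs hs1 (hh₁.LP H b t ht) (hh₂.Q H (b-1) t ht)]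
  have e2 : H.D j s (H.LP b t h₁) x = ∑ k ∈ Finset.range b,
      ((Nat.factorial k : ℝ))⁻¹ * (-1 : ℝ) ^ (k + 1) * t ^ (k + 1) * H.D j s (H.D (k+1) t h₁) x := by
    have := H.D_sum j s hs hs1 (Finset.range b) (f := fun k y =>
      ((Nat.factorial k : ℝ))⁻¹ * (-1 : ℝ) ^ (k + 1) * t ^ (k + 1) * H.D (k+1) t h₁ y)
      (fun k => (hh₁.D H (k+1) t ht).smul _) x
    refine this.trans (Finset.sum_congr rfl fun k _ => ?_)
    exact H.D_smul j s hs _ (hh₁.D H (k+1) t ht) x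
  have e3 : H.D j s (H.Q (b-1) t h₂) x = (-1) ^ (b-1) * t ^ (b-1) * H.D j s (H.D (b-1) t h₂) x :=
    H.D_smul j s hs _ (hh₂.D H (b-1) t ht) x
  rw [e2, e3, mul_add, Finset.mul_sum]
  refine (abs_add_le _ _).trans ?_
  rw [add_mul, Finset.sum_mul]
  refine add_le_add ((Finset.abs_sum_le_sum_abs _ _).trans (Finset.sum_le_sum fun k _ => ?_)) ?_
  · have h1 := hc₁ (k + 1) (by omega)
    have h2 : ((Nat.factorial k : ℝ))⁻¹ ≤ 1 :=
      inv_le_one_of_one_le₀ (by exact_mod_cast Nat.factorial_pos k)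
    calc _ = ((Nat.factorial k : ℝ))⁻¹ * |s ^ j * t ^ (k+1) * H.D j s (H.D (k+1) t h₁) x| := by
          simp only [abs_mul, abs_pow, abs_neg, abs_one, one_pow, one_mul, mul_one, abs_inv,
            Nat.abs_cast]
          ring
      _ ≤ 1 * (H.K (j + (k+1)) * θ * B) := by gcongr
      _ = _ := by ring
  · calc _ = |s ^ j * t ^ (b-1) * H.D j s (H.D (b-1) t h₂) x| := by
          simp only [abs_mul, abs_pow, abs_neg, abs_one, one_pow, one_mul]
          ring
      _ ≤ _ := hc₂
      _ = _ := by ring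

/-- Jointly measurable families of bounded functions, in logarithmic time. -/
def Fam (h : ℝ → M → ℝ) : Prop := Measurable (Function.uncurry h) ∧ ∀ τ, Bd (h τ)

lemma q_joint (m : ℕ) :
    Measurable (fun z : ℝ × (M × M) => H.q m (Real.exp z.1) z.2.1 z.2.2) := by
  refine measurable_uncurry_of_continuous_of_measurable
    (u := fun τ (w : M × M) => H.q m (Real.exp τ) w.1 w.2) (fun w => ?_) (fun τ => ?_)
  · rw [continuous_iff_continuousAt]
    intro τ
    exact ContinuousAt.comp (g := fun t => H.q m t w.1 w.2) (f := Real.exp)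
      (H.q_hasDeriv m (Real.exp τ) (Real.exp_pos _) w.1 w.2).continuousAt
      Real.continuous_exp.continuousAt
  · exact H.q_meas m _ (Real.exp_pos _)

lemma Fam.D (m : ℕ) {h : ℝ → M → ℝ} (hh : Fam h) : Fam (fun τ => H.D m (Real.exp τ) (h τ)) := by
  refine ⟨?_, fun τ => (hh.2 τ).D H m _ (Real.exp_pos _)⟩
  rcases isEmpty_or_nonempty M with hE | ⟨⟨x0⟩⟩
  · exact measurable_of_empty _
  have := H.sigmaFinite x0
  have e : Function.uncurry (fun τ => H.D m (Real.exp τ) (h τ)) = fun z : ℝ × M =>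
      ∫ y, H.q m (Real.exp z.1) z.2 y * h z.1 y ∂H.μ := by
    funext z
    exact H.D_eq' m _ (Real.exp_pos _) (hh.2 z.1) z.2
  rw [e]
  have h1 : Measurable (fun w : (ℝ × M) × M => H.q m (Real.exp w.1.1) w.1.2 w.2 * h w.1.1 w.2) := by
    refine Measurable.mul ?_ ?_
    · exact (H.q_joint m).comp (f := fun w : (ℝ × M) × M => (w.1.1, (w.1.2, w.2))) (by fun_prop)
    · exact hh.1.comp (f := fun w : (ℝ × M) × M => (w.1.1, w.2)) (by fun_prop)
  exact h1.stronglyMeasurable.integral_prod_right'.measurable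

lemma Fam.D_fixed (j : ℕ) (s : ℝ) (hs : 0 < s) {h : ℝ → M → ℝ} (hh : Fam h) (x : M) :
    Measurable (fun τ => H.D j s (h τ) x) := by
  have := H.sigmaFinite x
  have e : (fun τ => H.D j s (h τ) x) = fun τ => ∫ y, H.q j s x y * h τ y ∂H.μ := by
    funext τ
    exact H.D_eq' j s hs (hh.2 τ) x
  rw [e]
  have h1 : Measurable (fun w : ℝ × M => H.q j s x w.2 * h w.1 w.2) :=
    ((H.q_meas_right j s hs x).comp measurable_snd).mul hh.1
  exact h1.stronglyMeasurable.integral_prod_right'.measurable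

lemma Fam.add {h k : ℝ → M → ℝ} (hh : Fam h) (hk : Fam k) : Fam (fun τ x => h τ x + k τ x) :=
  ⟨hh.1.add hk.1, fun τ => (hh.2 τ).add (hk.2 τ)⟩

lemma Fam.mul {h k : ℝ → M → ℝ} (hh : Fam h) (hk : Fam k) : Fam (fun τ x => h τ x * k τ x) :=
  ⟨hh.1.mul hk.1, fun τ => (hh.2 τ).mul (hk.2 τ)⟩

lemma Fam.smul {h : ℝ → M → ℝ} {c : ℝ → ℝ} (hc : Measurable c) (hh : Fam h) :
    Fam (fun τ x => c τ * h τ x) :=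
  ⟨(hc.comp measurable_fst).mul hh.1, fun τ => (hh.2 τ).smul (c τ)⟩

lemma Fam.sum (F : Finset ℕ) {h : ℕ → ℝ → M → ℝ} (hh : ∀ i, Fam (h i)) :
    Fam (fun τ x => ∑ i ∈ F, h i τ x) :=
  ⟨Finset.measurable_sum F (f := fun i => fun z : ℝ × M => h i z.1 z.2) fun i _ => (hh i).1, fun τ => Bd.sum F fun i => (hh i).2 τ⟩

lemma Fam.Q (a : ℕ) {h : ℝ → M → ℝ} (hh : Fam h) : Fam (fun τ => H.Q a (Real.exp τ) (h τ)) :=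
  Fam.smul (c := fun τ => (-1) ^ a * Real.exp τ ^ a) (by fun_prop) (hh.D H a)

lemma Fam.P (a : ℕ) {h : ℝ → M → ℝ} (hh : Fam h) : Fam (fun τ => H.P a (Real.exp τ) (h τ)) :=
  Fam.sum _ fun k => Fam.smul
    (c := fun τ => ((Nat.factorial k : ℝ))⁻¹ * (-1 : ℝ) ^ k * Real.exp τ ^ k) (by fun_prop) (hh.D H k)

lemma Fam.LP (a : ℕ) {h : ℝ → M → ℝ} (hh : Fam h) : Fam (fun τ => H.LP a (Real.exp τ) (h τ)) :=
  Fam.sum _ fun k => Fam.smul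
    (c := fun τ => ((Nat.factorial k : ℝ))⁻¹ * (-1 : ℝ) ^ (k+1) * Real.exp τ ^ (k+1))
    (by fun_prop) (hh.D H (k+1))

lemma Fam.const {f : M → ℝ} (hf : Bd f) : Fam (fun _ : ℝ => f) := by
  refine ⟨?_, fun _ => hf⟩
  obtain ⟨B, hB⟩ := hf
  exact hB.1.comp measurable_snd

lemma Fam.para (b : ℕ) {f g : M → ℝ} (hf : Bd f) (hg : Bd g) :
    Fam (fun τ => H.paraInner b g f (Real.exp τ)) :=
  ((((Fam.const hf).Q H _).mul ((Fam.const hg).P H _)).LP H b).add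
    ((((Fam.const hf).LP H _).mul ((Fam.const hg).P H _)).Q H _)

lemma meas_para (j b : ℕ) (s : ℝ) (hs : 0 < s) {f g : M → ℝ} (hf : Bd f) (hg : Bd g) (x : M)
    (ν : Measure ℝ) {A : Set ℝ} (hA : MeasurableSet A) (hA0 : A ⊆ Ioi 0) :
    AEStronglyMeasurable (fun t => H.Q j s (H.paraInner b g f t) x / t) (ν.restrict A) := by
  have h1 : Measurable (fun τ => H.D j s (H.paraInner b g f (Real.exp τ)) x) :=
    Fam.D_fixed H j s hs (Fam.para H b hf hg) x
  have h2 : Measurable (fun t : ℝ => (-1) ^ j * s ^ j *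
      H.D j s (H.paraInner b g f (Real.exp (Real.log t))) x / t) :=
    ((h1.comp Real.measurable_log).const_mul _).div measurable_id
  refine h2.aestronglyMeasurable.congr ?_
  filter_upwards [ae_restrict_mem hA] with t ht
  rw [Real.exp_log (hA0 ht)]
  rfl

lemma time_integral (φ : ℝ → ℝ) (σ s N : ℝ) (hσ : -2 < σ) (hσ2 : σ < 2) (hs : 0 < s) (hs1 : s ≤ 1)
    (hN : 0 ≤ N) (hm : ∀ A : Set ℝ, MeasurableSet A → A ⊆ Ioi 0 →
      AEStronglyMeasurable φ (volume.restrict A))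
    (h1 : ∀ t, 0 < t → t ≤ s → |φ t| ≤ N * (t / s) * t ^ (σ / 2) / t)
    (h2 : ∀ t, s < t → t ≤ 1 → |φ t| ≤ N * (s / t) * t ^ (σ / 2) / t) :
    IntegrableOn φ (Ioc 0 1) ∧
      |∫ t in Ioc (0:ℝ) 1, φ t| ≤ N * (1 / (σ / 2 + 1) + 1 / (1 - σ / 2)) * s ^ (σ / 2) := by
  have p1 : 0 < σ / 2 + 1 := by linarith
  have p2 : 0 < 1 - σ / 2 := by linarith
  have hI1 : IntegrableOn (fun t : ℝ => N / s * t ^ (σ / 2)) (Ioc 0 s) := by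
    have := intervalIntegral.intervalIntegrable_rpow' (a := 0) (b := s) (r := σ / 2) (by linarith)
    rw [intervalIntegrable_iff_integrableOn_Ioc_of_le hs.le] at this
    exact this.const_mul _
  have hI2 : IntegrableOn (fun t : ℝ => N * s * t ^ (σ / 2 - 2)) (Ioi s) :=
    (integrableOn_Ioi_rpow_of_lt (by linarith) hs).const_mul _
  have hb1 : ∀ᵐ t ∂(volume.restrict (Ioc 0 s)), ‖φ t‖ ≤ N / s * t ^ (σ / 2) := by
    filter_upwards [ae_restrict_mem measurableSet_Ioc] with t ht
    refine (h1 t ht.1 ht.2).trans (le_of_eq ?_)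
    have := ht.1.ne'
    field_simp
  have hb2 : ∀ᵐ t ∂(volume.restrict (Ioc s 1)), ‖φ t‖ ≤ N * s * t ^ (σ / 2 - 2) := by
    filter_upwards [ae_restrict_mem measurableSet_Ioc] with t ht
    refine (h2 t ht.1 ht.2).trans (le_of_eq ?_)
    have ht0 : 0 < t := hs.trans ht.1
    rw [Real.rpow_sub ht0, show (2:ℝ) = ((2:ℕ):ℝ) by norm_num, Real.rpow_natCast]
    field_simp
  have hI2' := hI2.mono_set (Ioc_subset_Ioi_self : Ioc s 1 ⊆ Ioi s)
  have hφ1 : IntegrableOn φ (Ioc 0 s) := hI1.mono' (hm _ measurableSet_Ioc (fun t ht => ht.1)) hb1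
  have hφ2 : IntegrableOn φ (Ioc s 1) :=
    hI2'.mono' (hm _ measurableSet_Ioc (fun t ht => hs.trans ht.1)) hb2
  have hU : Ioc (0:ℝ) 1 = Ioc 0 s ∪ Ioc s 1 := (Ioc_union_Ioc_eq_Ioc hs.le hs1).symm
  refine ⟨by rw [hU]; exact hφ1.union hφ2, ?_⟩
  rw [hU, setIntegral_union (Ioc_disjoint_Ioc_of_le le_rfl) measurableSet_Ioc hφ1 hφ2]
  have hn1 : ‖∫ t in Ioc 0 s, φ t‖ ≤ N * (1 / (σ / 2 + 1)) * s ^ (σ / 2) := by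
    refine (norm_integral_le_of_norm_le hI1 hb1).trans (le_of_eq ?_)
    rw [integral_const_mul, ← intervalIntegral.integral_of_le hs.le,
      integral_rpow (Or.inl (by linarith)), Real.zero_rpow p1.ne', Real.rpow_add hs,
      Real.rpow_one]
    field_simp
    ring
  have hn2 : ‖∫ t in Ioc s 1, φ t‖ ≤ N * (1 / (1 - σ / 2)) * s ^ (σ / 2) := by
    refine (norm_integral_le_of_norm_le hI2' hb2).trans ?_
    refine (setIntegral_mono_set hI2 ?_ (Filter.Eventually.of_forall Ioc_subset_Ioi_self)).trans
      (le_of_eq ?_)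
    · filter_upwards [ae_restrict_mem measurableSet_Ioi] with t ht
      have : 0 < t := hs.trans ht
      simp only [Pi.zero_apply]
      positivity
    · rw [integral_const_mul, integral_Ioi_rpow_of_lt (by linarith) hs,
        show σ / 2 - 2 + 1 = σ / 2 - 1 by ring, Real.rpow_sub hs, Real.rpow_one,
        show σ / 2 - 1 = -(1 - σ / 2) by ring]
      field_simp
  rw [Real.norm_eq_abs] at hn1 hn2
  refine (abs_add_le _ _).trans ?_
  rw [mul_add, add_mul]
  exact add_le_add hn1 hn2

/-- The real-valued hypothesis extracted from `CNorm a σ f ≤ N`. -/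
def Data (a : ℕ) (σ : ℝ) (f : M → ℝ) (N : ℝ) : Prop :=
  Bd f ∧ 0 ≤ N ∧ (∀ x, |H.S 1 f x| ≤ N) ∧
    ∀ t, 0 < t → t ≤ 1 → ∀ x, |H.Q a t f x| ≤ t ^ (σ / 2) * N

lemma P_bound (b : ℕ) (β : ℝ) (hβ : β < 0) : ∃ C, 0 < C ∧ ∀ g G, H.Data (b - 1) β g G →
    ∀ t, 0 < t → t ≤ 1 → ∀ x, |H.P b t g x| ≤ C * t ^ (β / 2) * G := by
  have h : ∀ k : ℕ, β / 2 < k := fun k => by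
    have : (0:ℝ) ≤ k := by positivity
    linarith
  choose C hC hCf using fun k : ℕ => H.interp' (b - 1) β k (h k)
  refine ⟨∑ k ∈ Finset.range b, C k + 1, ?_, ?_⟩
  · have : 0 ≤ ∑ k ∈ Finset.range b, C k := Finset.sum_nonneg fun k _ => (hC k).le
    linarith
  rintro g G ⟨⟨B, hB⟩, hG, h1, h2⟩ t ht ht1 x
  have hp : 0 ≤ t ^ (β / 2) * G := by positivity
  calc |H.P b t g x| ≤ ∑ k ∈ Finset.range b, C k * t ^ (β / 2) * G := by
        refine (Finset.abs_sum_le_sum_abs _ _).trans (Finset.sum_le_sum fun k _ => ?_)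
        have h3 := hCf k g B G hB hG h1 h2 t ht ht1 x
        have h4 : ((Nat.factorial k : ℝ))⁻¹ ≤ 1 :=
          inv_le_one_of_one_le₀ (by exact_mod_cast Nat.factorial_pos k)
        calc _ = ((Nat.factorial k : ℝ))⁻¹ * |t ^ k * H.D k t g x| := by
              simp only [abs_mul, abs_pow, abs_neg, abs_one, one_pow, mul_one, abs_inv,
                Nat.abs_cast, D]
              ring
          _ ≤ 1 * (C k * t ^ (β / 2) * G) := by gcongr
          _ = _ := by ring
    _ = (∑ k ∈ Finset.range b, C k) * (t ^ (β / 2) * G) := by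
        rw [Finset.sum_mul]; exact Finset.sum_congr rfl fun k _ => by ring
    _ ≤ (∑ k ∈ Finset.range b, C k + 1) * (t ^ (β / 2) * G) := by gcongr; linarith
    _ = _ := by ring

lemma LP_bound (b : ℕ) (α : ℝ) (hα : α < 1) : ∃ C, 0 < C ∧ ∀ f F, H.Data (b - 1) α f F →
    ∀ t, 0 < t → t ≤ 1 → ∀ x, |H.LP b t f x| ≤ C * t ^ (α / 2) * F := by
  have h : ∀ k : ℕ, α / 2 < (k + 1 : ℕ) := fun k => by
    have : (0:ℝ) ≤ k := by positivity
    push_cast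
    linarith
  choose C hC hCf using fun k : ℕ => H.interp' (b - 1) α (k + 1) (h k)
  refine ⟨∑ k ∈ Finset.range b, C k + 1, ?_, ?_⟩
  · have : 0 ≤ ∑ k ∈ Finset.range b, C k := Finset.sum_nonneg fun k _ => (hC k).le
    linarith
  rintro g G ⟨⟨B, hB⟩, hG, h1, h2⟩ t ht ht1 x
  have hp : 0 ≤ t ^ (α / 2) * G := by positivity
  calc |H.LP b t g x| ≤ ∑ k ∈ Finset.range b, C k * t ^ (α / 2) * G := by
        refine (Finset.abs_sum_le_sum_abs _ _).trans (Finset.sum_le_sum fun k _ => ?_)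
        have h3 := hCf k g B G hB hG h1 h2 t ht ht1 x
        have h4 : ((Nat.factorial k : ℝ))⁻¹ ≤ 1 :=
          inv_le_one_of_one_le₀ (by exact_mod_cast Nat.factorial_pos k)
        calc _ = ((Nat.factorial k : ℝ))⁻¹ * |t ^ (k+1) * H.D (k+1) t g x| := by
              simp only [abs_mul, abs_pow, abs_neg, abs_one, one_pow, mul_one, abs_inv,
                Nat.abs_cast, D]
              ring
          _ ≤ 1 * (C k * t ^ (α / 2) * G) := by gcongr
          _ = _ := by ring
    _ = (∑ k ∈ Finset.range b, C k) * (t ^ (α / 2) * G) := by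
        rw [Finset.sum_mul]; exact Finset.sum_congr rfl fun k _ => by ring
    _ ≤ (∑ k ∈ Finset.range b, C k + 1) * (t ^ (α / 2) * G) := by gcongr; linarith
    _ = _ := by ring

lemma core (b : ℕ) (hb : 2 ≤ b) (α β : ℝ) (hα : α < 1) (hβ : β < 0) (j : ℕ) :
    ∃ C, 0 < C ∧ ∀ f g F G, H.Data (b - 1) α f F → H.Data (b - 1) β g G →
      ∀ s, 0 < s → s ≤ 1 → ∀ t, 0 < t → t ≤ 1 → ∀ x,
        (t ≤ s → |H.Q j s (H.paraInner b g f t) x| ≤ C * (G * F) * (t / s) * t ^ ((α + β) / 2)) ∧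
        (1 ≤ j → s ≤ t →
          |H.Q j s (H.paraInner b g f t) x| ≤ C * (G * F) * (s / t) * t ^ ((α + β) / 2)) := by
  obtain ⟨CP, hCP, hP⟩ := H.P_bound b β hβ
  obtain ⟨CL, hCL, hL⟩ := H.LP_bound b α hα
  set KK := ∑ k ∈ Finset.range b, H.K (j + (k + 1)) + H.K (j + (b - 1)) with hKK
  have hKK0 : 0 < KK := by
    have : 0 ≤ ∑ k ∈ Finset.range b, H.K (j + (k + 1)) := Finset.sum_nonneg fun k _ => (H.K_pos _).le
    linarith [H.K_pos (j + (b - 1))]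
  refine ⟨KK * ((1 + CL) * CP), by positivity, ?_⟩
  intro f g F G hf hg s hs hs1 t ht ht1 x
  have hF := hf.2.1
  have hG := hg.2.1
  set B := (1 + CL) * CP * t ^ ((α + β) / 2) * (G * F) with hB
  have hB0 : 0 ≤ B := by positivity
  have hpow : t ^ ((α + β) / 2) = t ^ (α / 2) * t ^ (β / 2) := by
    rw [← Real.rpow_add ht]; congr 1; ring
  have hprod : ∀ u v : ℝ, |u| ≤ (1 + CL) * t ^ (α / 2) * F → |v| ≤ CP * t ^ (β / 2) * G →
      |u * v| ≤ B := by
    intro u v hu hv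
    rw [abs_mul]
    refine (mul_le_mul hu hv (abs_nonneg _) (by positivity)).trans (le_of_eq ?_)
    rw [hB, hpow]; ring
  have bd1 : Bd (fun z => H.Q (b - 1) t f z * H.P b t g z) := (hf.1.Q H _ t ht).mul (hg.1.P H _ t ht)
  have bd2 : Bd (fun z => H.LP b t f z * H.P b t g z) := (hf.1.LP H _ t ht).mul (hg.1.P H _ t ht)
  have bm1 : BM B (fun z => H.Q (b - 1) t f z * H.P b t g z) := by
    refine ⟨bd1.choose_spec.1, fun z => hprod _ _ ?_ (hP g G hg t ht ht1 z)⟩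
    refine (hf.2.2.2 t ht ht1 z).trans ?_
    have : 0 ≤ t ^ (α / 2) * F := by positivity
    nlinarith
  have bm2 : BM B (fun z => H.LP b t f z * H.P b t g z) := by
    refine ⟨bd2.choose_spec.1, fun z => hprod _ _ ?_ (hP g G hg t ht ht1 z)⟩
    refine (hL f F hf t ht ht1 z).trans ?_
    have : 0 ≤ t ^ (α / 2) * F := by positivity
    nlinarith
  constructor
  · intro hts
    have := H.Q_para_le j b s t (t / s) B hs hs1 ht bd1 bd2 x (by positivity) hB0
      (fun k hk => H.comp_le j k hk s t hs1 ht hts bm1 x)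
      (H.comp_le j (b - 1) (by omega) s t hs1 ht hts bm2 x)
    refine this.trans (le_of_eq ?_)
    rw [hB]; ring
  · intro hj hst
    have := H.Q_para_le j b s t (s / t) B hs hs1 ht bd1 bd2 x (by positivity) hB0
      (fun k hk => H.comp_ge j k hj s t hs ht1 hst bm1 x)
      (H.comp_ge j (b - 1) hj s t hs ht1 hst bm2 x)
    refine this.trans (le_of_eq ?_)
    rw [hB]; ring

lemma le_supNorm (f : M → ℝ) (x : M) : ENNReal.ofReal |f x| ≤ supNorm f := by
  have : (‖f x‖₊ : ℝ≥0∞) ≤ supNorm f := le_iSup (fun x => (‖f x‖₊ : ℝ≥0∞)) x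
  rwa [← enorm_eq_nnnorm, ← ofReal_norm] at this

lemma supNorm_le {f : M → ℝ} {B : ℝ} (h : ∀ x, |f x| ≤ B) : supNorm f ≤ ENNReal.ofReal B := by
  refine iSup_le fun x => ?_
  rw [← enorm_eq_nnnorm, ← ofReal_norm]
  exact ENNReal.ofReal_le_ofReal (h x)

lemma data_of (a : ℕ) (σ : ℝ) (f : M → ℝ) (hm : Measurable f) (hf : supNorm f < ⊤)
    (hC : H.CNorm a σ f < ⊤) : H.Data a σ f (H.CNorm a σ f).toReal := by
  refine ⟨⟨(supNorm f).toReal, hm, fun x => ?_⟩, ENNReal.toReal_nonneg, fun x => ?_, ?_⟩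
  · rw [← ENNReal.ofReal_le_iff_le_toReal hf.ne]
    exact le_supNorm f x
  · rw [← ENNReal.ofReal_le_iff_le_toReal hC.ne]
    exact (le_supNorm _ x).trans le_self_add
  · intro t ht ht1 x
    have h1 : ENNReal.ofReal (t ^ (-σ / 2)) * supNorm (H.Q a t f) ≤ H.CNorm a σ f := by
      refine le_trans ?_ le_add_self
      exact le_iSup₂ (f := fun t (_ : t ∈ Set.Ioc (0 : ℝ) 1) =>
        ENNReal.ofReal (t ^ (-σ / 2)) * supNorm (H.Q a t f)) t ⟨ht, ht1⟩
    have h2 : ENNReal.ofReal (t ^ (-σ / 2) * |H.Q a t f x|) ≤ H.CNorm a σ f := by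
      rw [ENNReal.ofReal_mul (by positivity)]
      refine le_trans ?_ h1
      gcongr
      exact le_supNorm _ x
    rw [ENNReal.ofReal_le_iff_le_toReal hC.ne] at h2
    calc |H.Q a t f x| = t ^ (σ / 2) * (t ^ (-σ / 2) * |H.Q a t f x|) := by
          rw [← mul_assoc, ← Real.rpow_add ht]
          rw [show σ / 2 + -σ / 2 = 0 by ring, Real.rpow_zero, one_mul]
      _ ≤ _ := by gcongr


end helper

end HeatKernelSetup

/-- **Proposition 3.2, second estimate.** For `b ≥ 2`, `α ∈ (-2,1)`, `β < 0` with
`α + β ∈ (-2,1)`, the paraproduct satisfies `‖Π_g^{(b)}(f)‖_{C^{α+β}} ≤ C ‖g‖_{C^β} ‖f‖_{C^α}`,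
its frequency pieces being given by absolutely convergent `dt/t`-integrals. -/
theorem paraproduct_estimate_negative_regularity
    {M : Type*} [MeasurableSpace M] [MetricSpace M] (H : HeatKernelSetup M)
    (b : ℕ) (hb : 2 ≤ b) (α β : ℝ) (hα : α ∈ Set.Ioo (-2 : ℝ) 1) (hβ : β < 0)
    (hαβ : α + β ∈ Set.Ioo (-2 : ℝ) 1) :
    ∃ C, 0 < C ∧ ∀ f g : M → ℝ,
      Measurable f → supNorm f < ⊤ → H.CNorm (b - 1) α f < ⊤ →
      Measurable g → supNorm g < ⊤ → H.CNorm (b - 1) β g < ⊤ →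
      (∀ s ∈ Set.Ioc (0 : ℝ) 1, ∀ x : M,
        IntegrableOn (fun t => H.Q (b - 1) s (H.paraInner b g f t) x / t) (Set.Ioc 0 1)) ∧
      (∀ x : M,
        IntegrableOn (fun t => H.S 1 (H.paraInner b g f t) x / t) (Set.Ioc 0 1)) ∧
      supNorm (H.paraS b g f) +
          (⨆ s ∈ Set.Ioc (0 : ℝ) 1,
            ENNReal.ofReal (s ^ (-(α + β) / 2)) * supNorm (H.paraQ b (b - 1) g f s))
        ≤ ENNReal.ofReal C * H.CNorm (b - 1) β g * H.CNorm (b - 1) α f := by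
  obtain ⟨C0, hC0, h0⟩ := H.core b hb α β hα.2 hβ 0
  obtain ⟨C1, hC1, h1⟩ := H.core b hb α β hα.2 hβ (b - 1)
  set σ := α + β with hσ
  have p1 : 0 < σ / 2 + 1 := by linarith [hαβ.1]
  have p2 : 0 < 1 - σ / 2 := by linarith [hαβ.2]
  set κ := 1 / (σ / 2 + 1) + 1 / (1 - σ / 2) with hκ
  have hκ0 : 0 < κ := by positivity
  set γ := |(gammaInt b)⁻¹| with hγ
  have hγ0 : 0 ≤ γ := abs_nonneg _
  refine ⟨γ * C0 * κ + γ * C1 * κ + 1, by positivity, ?_⟩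
  intro f g hfm hfb hfC hgm hgb hgC
  have df := H.data_of (b - 1) α f hfm hfb hfC
  have dg := H.data_of (b - 1) β g hgm hgb hgC
  set F := (H.CNorm (b - 1) α f).toReal with hF
  set G := (H.CNorm (b - 1) β g).toReal with hG
  have hF0 : 0 ≤ F := df.2.1
  have hG0 : 0 ≤ G := dg.2.1
  have hS1 : ∀ (h : M → ℝ) (x : M), H.S 1 h x = H.Q 0 1 h x := by
    intro h x
    simp [HeatKernelSetup.Q]
  have TQ : ∀ s : ℝ, 0 < s → s ≤ 1 → ∀ x, _ := fun s hs hs1 x =>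
    HeatKernelSetup.time_integral (fun t => H.Q (b - 1) s (H.paraInner b g f t) x / t) σ s
      (C1 * (G * F)) hαβ.1 (by linarith [hαβ.2]) hs hs1 (by positivity)
      (fun A hA hA0 => H.meas_para (b - 1) b s hs df.1 dg.1 x volume hA hA0)
      (fun t ht hts => by
        rw [abs_div, abs_of_pos ht]
        exact div_le_div_of_nonneg_right
          ((h1 f g F G df dg s hs hs1 t ht (hts.trans hs1) x).1 hts) ht.le)
      (fun t hts ht1 => by
        have ht : 0 < t := hs.trans hts
        rw [abs_div, abs_of_pos ht]
        exact div_le_div_of_nonneg_right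
          ((h1 f g F G df dg s hs hs1 t ht ht1 x).2 (by omega) hts.le) ht.le)
  have TS : ∀ x, _ := fun x =>
    HeatKernelSetup.time_integral (fun t => H.Q 0 1 (H.paraInner b g f t) x / t) σ 1
      (C0 * (G * F)) hαβ.1 (by linarith [hαβ.2]) one_pos le_rfl (by positivity)
      (fun A hA hA0 => H.meas_para 0 b 1 one_pos df.1 dg.1 x volume hA hA0)
      (fun t ht hts => by
        rw [abs_div, abs_of_pos ht]
        exact div_le_div_of_nonneg_right
          ((h0 f g F G df dg 1 one_pos le_rfl t ht hts x).1 hts) ht.le)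
      (fun t hts ht1 => absurd hts (not_lt.2 ht1))
  refine ⟨fun s hs x => (TQ s hs.1 hs.2 x).1, fun x => ?_, ?_⟩
  · simp_rw [hS1]
    exact (TS x).1
  have eS : supNorm (H.paraS b g f) ≤ ENNReal.ofReal (γ * C0 * κ * (G * F)) := by
    refine HeatKernelSetup.supNorm_le fun x => ?_
    have h2 := (TS x).2
    unfold HeatKernelSetup.paraS
    simp_rw [hS1]
    rw [abs_mul]
    rw [Real.one_rpow] at h2
    calc _ ≤ γ * (C0 * (G * F) * κ * 1) := by gcongr
      _ = _ := by ring
  have eQ : (⨆ s ∈ Set.Ioc (0 : ℝ) 1,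
      ENNReal.ofReal (s ^ (-σ / 2)) * supNorm (H.paraQ b (b - 1) g f s))
      ≤ ENNReal.ofReal (γ * C1 * κ * (G * F)) := by
    refine iSup₂_le fun s hs => ?_
    have hs0 := hs.1
    have h3 : supNorm (H.paraQ b (b - 1) g f s)
        ≤ ENNReal.ofReal (γ * C1 * κ * (G * F) * s ^ (σ / 2)) := by
      refine HeatKernelSetup.supNorm_le fun x => ?_
      have h2 := (TQ s hs.1 hs.2 x).2
      unfold HeatKernelSetup.paraQ
      rw [abs_mul]
      calc _ ≤ γ * (C1 * (G * F) * κ * s ^ (σ / 2)) := by gcongr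
        _ = _ := by ring
    calc _ ≤ ENNReal.ofReal (s ^ (-σ / 2)) *
          ENNReal.ofReal (γ * C1 * κ * (G * F) * s ^ (σ / 2)) := by gcongr
      _ = ENNReal.ofReal (γ * C1 * κ * (G * F)) := by
        rw [← ENNReal.ofReal_mul (by positivity)]
        congr 1
        have : s ^ (-σ / 2) * s ^ (σ / 2) = 1 := by
          rw [← Real.rpow_add hs0, show -σ / 2 + σ / 2 = 0 by ring, Real.rpow_zero]
        linear_combination (γ * C1 * κ * (G * F)) * this
  rw [← ENNReal.ofReal_toReal hgC.ne, ← ENNReal.ofReal_toReal hfC.ne,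
    ← ENNReal.ofReal_mul (by positivity), ← ENNReal.ofReal_mul (by positivity)]
  refine (add_le_add eS eQ).trans ?_
  rw [← ENNReal.ofReal_add (by positivity) (by positivity)]
  apply ENNReal.ofReal_le_ofReal
  have : 0 ≤ G * F := by positivity
  change _ ≤ (γ * C0 * κ + γ * C1 * κ + 1) * G * F
  nlinarith
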